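/- arXiv:1505.00403 — 2 statements merged into one kernel-verified Lean document; each statement's English description precedes it below -/
import Mathlib

section
/- Let g₀, g₋₁ be finite-dimensional real vector spaces, X₀ ∈ End(g₀), X₁ ∈ End(g₋₁), and l_X : g₀ × g₀ → g₋₁ a bilinear map. Define E(t)(x,y) := ∑_{n=1}^∞ (tⁿ/n!) ∑_{i+j+k=n−1, i,j,k≥0} C(i+j, i) · X₁ᵏ( l_X(X₀ⁱ x, X₀ʲ y) ). Then for all s,t ∈ ℝ and all x,y ∈ g₀: E(t+s)(x,y) = exp(tX₁)( E(s)(x,y) ) + E(t)( exp(sX₀)x, exp(sX₀)y ). -/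
open LinearMap

/-- The exponential `exp(X) m = ∑ Xⁿm/n!` of a linear endomorphism. -/
noncomputable def expv {M : Type*} [NormedAddCommGroup M] [NormedSpace ℝ M]
    (X : M →ₗ[ℝ] M) (m : M) : M :=
  ∑' n : ℕ, ((n.factorial : ℝ))⁻¹ • (X ^ n) m

/-- The series
`E(t)(x,y) = ∑_{n≥1} (tⁿ/n!) ∑_{i+j+k=n−1} C(i+j,i) X₁ᵏ l_X(X₀ⁱx, X₀ʲy)`. -/
noncomputable def Eser {g0 gm : Type*}
    [NormedAddCommGroup g0] [NormedSpace ℝ g0]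
    [NormedAddCommGroup gm] [NormedSpace ℝ gm]
    (X0 : g0 →ₗ[ℝ] g0) (X1 : gm →ₗ[ℝ] gm) (lX : g0 →ₗ[ℝ] g0 →ₗ[ℝ] gm)
    (t : ℝ) (x y : g0) : gm :=
  ∑' n : ℕ, (t ^ (n + 1) / ((n + 1).factorial : ℝ)) •
    ∑ c ∈ Finset.Nat.antidiagonalTuple 3 n,
      (((c 0 + c 1).choose (c 0) : ℝ)) •
        (X1 ^ (c 2)) (lX ((X0 ^ (c 0)) x) ((X0 ^ (c 1)) y))

/-!
The exponential of a block triangular operator `M = [[A, L], [0, D]]` has the form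
`exp (t • M) = [[exp (t • A), F t], [0, exp (t • D)]]`,
where the corner has the power series `F t = ∑ (tⁿ⁺¹ / (n+1)!) ∑_{i+j=n} Aʲ L Dⁱ`. Comparing the
corners in `exp ((t + s) • M) = exp (t • M) * exp (s • M)` gives
`F (t + s) = exp (t • A) ∘ F s + F t ∘ exp (s • D)`.
Here `A = X₁`, `D = X₀ ⊗ 1 + 1 ⊗ X₀` and `L` is the linear map on `g₀ ⊗ g₀` induced by `l_X`, so
that `E t (x, y) = F t (x ⊗ y)` by the binomial theorem and `exp (s • D)` maps `x ⊗ y` to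
`exp (s • X₀) x ⊗ exp (s • X₀) y`. The role of `g₀ ⊗ g₀` is played by the Banach space of continuous
linear maps from bilinear maps `b` to `g₋₁`, with `x ⊗ y` sending `b` to `b x y`.
-/

open Finset

open NormedSpace (exp)

theorem sum_antidiagonalTuple_succ {M : Type*} [AddCommMonoid M] (k n : ℕ)
    (f : (Fin (k + 1) → ℕ) → M) :
    ∑ c ∈ Nat.antidiagonalTuple (k + 1) n, f c
      = ∑ p ∈ antidiagonal n, ∑ d ∈ Nat.antidiagonalTuple k p.1,
          f (Fin.snoc (α := fun _ => ℕ) d p.2) := by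
  rw [sum_sigma']
  refine sum_bij' (fun c _ => ⟨(∑ i, Fin.init c i, c (Fin.last k)), Fin.init c⟩)
    (fun z _ => Fin.snoc z.2 z.1.2) ?_ ?_ ?_ ?_ ?_
  · intro c hc
    simpa [Nat.mem_antidiagonalTuple, Fin.sum_univ_castSucc, Fin.init] using hc
  · rintro ⟨p, d⟩ h
    simp_all [Nat.mem_antidiagonalTuple, Fin.sum_univ_castSucc]
  · simp
  · rintro ⟨⟨m, l⟩, d⟩ h
    obtain rfl : ∑ i, d i = m := by simp_all [Nat.mem_antidiagonalTuple]
    simp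
  · simp

theorem sum_antidiagonalTuple_three {M : Type*} [AddCommMonoid M] (n : ℕ)
    (f : (Fin 3 → ℕ) → M) :
    ∑ c ∈ Nat.antidiagonalTuple 3 n, f c
      = ∑ p ∈ antidiagonal n, ∑ q ∈ antidiagonal p.1, f ![q.1, q.2, p.2] := by
  simp only [sum_antidiagonalTuple_succ 2, Nat.antidiagonalTuple_two, sum_map]
  refine sum_congr rfl fun p _ => sum_congr rfl fun q _ => congrArg f ?_
  ext i
  fin_cases i <;> rfl

section Exponential

variable {𝕂 V W : Type*} [NontriviallyNormedField 𝕂] [NormedAddCommGroup V] [NormedSpace 𝕂 V]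
  [NormedAddCommGroup W] [NormedSpace 𝕂 W]

theorem map_pow_of_semiconj {φ : V →L[𝕂] W} {T : V →L[𝕂] V} {S : W →L[𝕂] W}
    (h : Function.Semiconj φ T S) (n : ℕ) (v : V) : φ ((T ^ n) v) = (S ^ n) (φ v) := by
  simpa only [FunLike.coe_pow_eq_iterate] using h.iterate_right n v

variable [CharZero 𝕂] [ContinuousSMul ℚ 𝕂] [CompleteSpace V]

theorem hasSum_exp_smul_apply (T : V →L[𝕂] V) (t : 𝕂) (v : V) :
    HasSum (fun n : ℕ => (t ^ n / (n.factorial : 𝕂)) • (T ^ n) v) (exp (t • T) v) := by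
  have h := (ContinuousLinearMap.apply 𝕂 V v).hasSum
    (NormedSpace.exp_series_hasSum_exp' (𝕂 := 𝕂) (t • T))
  simpa [smul_pow, smul_smul, div_eq_inv_mul] using h

theorem exp_add_apply_of_commute {P Q : V →L[𝕂] V} (h : Commute P Q) (v : V) :
    exp (P + Q) v = exp P (exp Q v) := by
  have hmem (T : V →L[𝕂] V) : T ∈ Metric.eball 0 (NormedSpace.expSeries 𝕂 (V →L[𝕂] V)).radius := by
    simp [NormedSpace.expSeries_radius_eq_top]
  rw [NormedSpace.exp_add_of_commute_of_mem_ball h (hmem P) (hmem Q), mul_apply_eq_comp]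

theorem map_exp_smul_of_semiconj [CompleteSpace W] {φ : V →L[𝕂] W} {T : V →L[𝕂] V} {S : W →L[𝕂] W}
    (h : Function.Semiconj φ T S) (t : 𝕂) (v : V) :
    φ (exp (t • T) v) = exp (t • S) (φ v) := by
  refine (φ.hasSum (hasSum_exp_smul_apply T t v)).unique ?_
  simpa only [Function.comp_def, map_smul, map_pow_of_semiconj h] using
    hasSum_exp_smul_apply S t (φ v)

end Exponential

section BlockUpper

variable {𝕂 V W : Type*} [NontriviallyNormedField 𝕂] [NormedAddCommGroup V] [NormedSpace 𝕂 V]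
  [NormedAddCommGroup W] [NormedSpace 𝕂 W]
  (A : V →L[𝕂] V) (L : W →L[𝕂] V) (D : W →L[𝕂] W)

/-- The block upper triangular operator `[[A, L], [0, D]]` on `V × W`. -/
def blockUpper : V × W →L[𝕂] V × W :=
  (A.coprod L).prod (D ∘L .snd 𝕂 V W)

theorem blockUpper_apply (z : V × W) : blockUpper A L D z = (A z.1 + L z.2, D z.2) := rfl

theorem semiconj_snd_blockUpper :
    Function.Semiconj (ContinuousLinearMap.snd 𝕂 V W) (blockUpper A L D) D := fun _ => rfl

theorem semiconj_inl_blockUpper :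
    Function.Semiconj (ContinuousLinearMap.inl 𝕂 V W) A (blockUpper A L D) := fun _ => by
  simp [blockUpper_apply]

theorem blockUpper_pow_succ_inr_fst (n : ℕ) (w : W) :
    ((blockUpper A L D ^ (n + 1)) (0, w)).1
      = ∑ p ∈ antidiagonal n, (A ^ p.2) (L ((D ^ p.1) w)) := by
  induction n with
  | zero => simp [blockUpper_apply]
  | succ n ih =>
    have hsnd : ((blockUpper A L D ^ (n + 1)) (0, w)).2 = (D ^ (n + 1)) w :=
      map_pow_of_semiconj (semiconj_snd_blockUpper A L D) (n + 1) (0, w)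
    rw [pow_succ', mul_apply_eq_comp, blockUpper_apply, ih, hsnd, Nat.sum_antidiagonal_succ']
    simp [pow_succ', add_comm]

/-- The upper right corner of `exp (t • [[A, L], [0, D]])`, the abstract form of the series `E`. -/
noncomputable def expCorner (t : 𝕂) (w : W) : V :=
  (exp (t • blockUpper A L D) (0, w)).1

variable [CharZero 𝕂] [ContinuousSMul ℚ 𝕂] [CompleteSpace V] [CompleteSpace W]

theorem hasSum_expCorner (t : 𝕂) (w : W) :
    HasSum (fun n : ℕ => (t ^ (n + 1) / ((n + 1).factorial : 𝕂)) •
      ∑ p ∈ antidiagonal n, (A ^ p.2) (L ((D ^ p.1) w))) (expCorner A L D t w) := by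
  have h := (ContinuousLinearMap.fst 𝕂 V W).hasSum
    (hasSum_exp_smul_apply (blockUpper A L D) t (0, w))
  rw [← hasSum_nat_add_iff' 1] at h
  simp only [← blockUpper_pow_succ_inr_fst]
  simpa [Function.comp_def, expCorner] using h

theorem expCorner_add (s t : 𝕂) (w : W) :
    expCorner A L D (t + s) w
      = exp (t • A) (expCorner A L D s w) + expCorner A L D t (exp (s • D) w) := by
  have hsnd : (exp (s • blockUpper A L D) (0, w)).2 = exp (s • D) w :=
    map_exp_smul_of_semiconj (semiconj_snd_blockUpper A L D) s (0, w)
  have hinl (v : V) : exp (t • blockUpper A L D) (v, 0) = (exp (t • A) v, 0) :=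
    (map_exp_smul_of_semiconj (semiconj_inl_blockUpper A L D) t v).symm
  have hsplit : exp (s • blockUpper A L D) (0, w)
      = (expCorner A L D s w, 0) + (0, exp (s • D) w) := by
    simp [← hsnd, expCorner]
  have hadd : exp ((t + s) • blockUpper A L D) (0, w)
      = (exp (t • A) (expCorner A L D s w), 0)
        + exp (t • blockUpper A L D) (0, exp (s • D) w) := by
    rw [add_smul, exp_add_apply_of_commute (((Commute.refl _).smul_left t).smul_right s), hsplit,
      map_add, hinl]
  exact congrArg Prod.fst hadd

end BlockUpper

section Leibniz

variable {𝕂 E F W : Type*} [NontriviallyNormedField 𝕂] [NormedAddCommGroup E] [NormedSpace 𝕂 E]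
  [NormedAddCommGroup F] [NormedSpace 𝕂 F] [NormedAddCommGroup W] [NormedSpace 𝕂 W]
  {τ : E →L[𝕂] F →L[𝕂] W} {X : E →L[𝕂] E} {Y : F →L[𝕂] F} {P Q : W →L[𝕂] W}

theorem add_pow_apply_of_semiconj (hPQ : Commute P Q)
    (hP : ∀ y, Function.Semiconj (τ.flip y) X P) (hQ : ∀ x, Function.Semiconj (τ x) Y Q)
    (n : ℕ) (x : E) (y : F) :
    ((P + Q) ^ n) (τ x y)
      = ∑ q ∈ antidiagonal n, (n.choose q.1 : 𝕂) • τ ((X ^ q.1) x) ((Y ^ q.2) y) := by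
  have hterm (i j : ℕ) : (P ^ i * Q ^ j) (τ x y) = τ ((X ^ i) x) ((Y ^ j) y) := by
    rw [mul_apply_eq_comp, ← map_pow_of_semiconj (hQ x), ← τ.flip_apply,
      ← map_pow_of_semiconj (hP _), τ.flip_apply]
  simp only [hPQ.add_pow', _root_.sum_apply, _root_.smul_apply, hterm, Nat.cast_smul_eq_nsmul]

theorem exp_smul_add_apply_of_semiconj [CharZero 𝕂] [ContinuousSMul ℚ 𝕂]
    [CompleteSpace E] [CompleteSpace F] [CompleteSpace W] (hPQ : Commute P Q)
    (hP : ∀ y, Function.Semiconj (τ.flip y) X P) (hQ : ∀ x, Function.Semiconj (τ x) Y Q)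
    (s : 𝕂) (x : E) (y : F) :
    exp (s • (P + Q)) (τ x y) = τ (exp (s • X) x) (exp (s • Y) y) := by
  rw [smul_add, exp_add_apply_of_commute ((hPQ.smul_left s).smul_right s),
    ← map_exp_smul_of_semiconj (hQ x), ← τ.flip_apply, ← map_exp_smul_of_semiconj (hP _),
    τ.flip_apply]

end Leibniz

section EvalTensor

set_option maxSynthPendingDepth 3

open ContinuousLinearMap (precomp postcomp)

variable {𝕂 E F : Type*} (G : Type*) [NontriviallyNormedField 𝕂]
  [NormedAddCommGroup E] [NormedSpace 𝕂 E] [NormedAddCommGroup F] [NormedSpace 𝕂 F]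
  [NormedAddCommGroup G] [NormedSpace 𝕂 G]

variable (𝕂 E F) in
/-- The tensor `x ⊗ y`, encoded as the evaluation `b ↦ b x y` of continuous bilinear maps with
values in `G`. The space of all continuous linear maps in `b` stands in for a completed tensor
product: it is complete as soon as `G` is. -/
noncomputable def evalTensor : E →L[𝕂] F →L[𝕂] (E →L[𝕂] F →L[𝕂] G) →L[𝕂] G :=
  ((ContinuousLinearMap.compL 𝕂 (E →L[𝕂] F →L[𝕂] G) (F →L[𝕂] G) G).bilinearComp
    (ContinuousLinearMap.apply 𝕂 G) (ContinuousLinearMap.apply 𝕂 (F →L[𝕂] G))).flip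

theorem evalTensor_apply (x : E) (y : F) (b : E →L[𝕂] F →L[𝕂] G) :
    evalTensor 𝕂 E F G x y b = b x y := rfl

/-- The operator `X ⊗ 1` on the space containing the tensors `evalTensor 𝕂 E F G x y`. -/
noncomputable def tensorLeft (X : E →L[𝕂] E) :
    ((E →L[𝕂] F →L[𝕂] G) →L[𝕂] G) →L[𝕂] (E →L[𝕂] F →L[𝕂] G) →L[𝕂] G :=
  precomp G (precomp (F →L[𝕂] G) X)

/-- The operator `1 ⊗ Y` on the space containing the tensors `evalTensor 𝕂 E F G x y`. -/
noncomputable def tensorRight (Y : F →L[𝕂] F) :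
    ((E →L[𝕂] F →L[𝕂] G) →L[𝕂] G) →L[𝕂] (E →L[𝕂] F →L[𝕂] G) →L[𝕂] G :=
  precomp G (postcomp E (precomp G Y))

theorem commute_tensorLeft_tensorRight (X : E →L[𝕂] E) (Y : F →L[𝕂] F) :
    Commute (tensorLeft G X) (tensorRight G Y) := by
  ext ξ b
  rfl

theorem semiconj_evalTensor_tensorLeft (X : E →L[𝕂] E) (y : F) :
    Function.Semiconj ((evalTensor 𝕂 E F G).flip y) X (tensorLeft G X) := fun _ => by
  ext b
  rfl

theorem semiconj_evalTensor_tensorRight (Y : F →L[𝕂] F) (x : E) :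
    Function.Semiconj (evalTensor 𝕂 E F G x) Y (tensorRight G Y) := fun _ => by
  ext b
  rfl

end EvalTensor

theorem expv_smul_toLinearMap {V : Type*} [NormedAddCommGroup V] [NormedSpace ℝ V]
    [CompleteSpace V] (T : V →L[ℝ] V) (t : ℝ) (v : V) :
    expv (t • T.toLinearMap) v = exp (t • T) v := by
  rw [← (hasSum_exp_smul_apply T t v).tsum_eq, expv]
  simp [smul_pow, smul_smul, div_eq_inv_mul, ← ContinuousLinearMap.toLinearMap_pow]

section Eser

set_option maxSynthPendingDepth 3

variable {g0 gm : Type*} [NormedAddCommGroup g0] [NormedSpace ℝ g0]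
  [NormedAddCommGroup gm] [NormedSpace ℝ gm] [CompleteSpace gm]
  (X0 : g0 →L[ℝ] g0) (X1 : gm →L[ℝ] gm) (lX : g0 →L[ℝ] g0 →L[ℝ] gm)

theorem Eser_eq_expCorner (t : ℝ) (x y : g0) :
    Eser X0.toLinearMap X1.toLinearMap lX.toLinearMap₁₂ t x y
      = expCorner X1 (ContinuousLinearMap.apply ℝ gm lX) (tensorLeft gm X0 + tensorRight gm X0) t
          (evalTensor ℝ g0 g0 gm x y) := by
  rw [← (hasSum_expCorner _ _ _ t _).tsum_eq, Eser]
  refine tsum_congr fun n => congrArg _ ?_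
  rw [sum_antidiagonalTuple_three]
  refine sum_congr rfl fun p _ => ?_
  rw [add_pow_apply_of_semiconj (commute_tensorLeft_tensorRight gm X0 X0)
    (semiconj_evalTensor_tensorLeft gm X0) (semiconj_evalTensor_tensorRight gm X0)]
  simp only [map_sum, map_smul]
  refine sum_congr rfl fun q hq => ?_
  rw [← mem_antidiagonal.mp hq]
  simp [evalTensor_apply, ← ContinuousLinearMap.toLinearMap_pow]

theorem Eser_one_parameter_general [CompleteSpace g0] (s t : ℝ) (x y : g0) :
    Eser X0.toLinearMap X1.toLinearMap lX.toLinearMap₁₂ (t + s) x y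
      = expv (t • X1.toLinearMap) (Eser X0.toLinearMap X1.toLinearMap lX.toLinearMap₁₂ s x y)
        + Eser X0.toLinearMap X1.toLinearMap lX.toLinearMap₁₂ t
            (expv (s • X0.toLinearMap) x) (expv (s • X0.toLinearMap) y) := by
  simp only [Eser_eq_expCorner, expv_smul_toLinearMap, expCorner_add]
  rw [exp_smul_add_apply_of_semiconj (commute_tensorLeft_tensorRight gm X0 X0)
    (semiconj_evalTensor_tensorLeft gm X0) (semiconj_evalTensor_tensorRight gm X0)]

end Eser

/-- the one-parameter property of the series `E`:
`E(t+s)(x,y) = exp(tX₁)(E(s)(x,y)) + E(t)(exp(sX₀)x, exp(sX₀)y)`. -/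
theorem Eser_one_parameter
    {g0 gm : Type*}
    [NormedAddCommGroup g0] [NormedSpace ℝ g0] [FiniteDimensional ℝ g0]
    [NormedAddCommGroup gm] [NormedSpace ℝ gm] [FiniteDimensional ℝ gm]
    (X0 : g0 →ₗ[ℝ] g0) (X1 : gm →ₗ[ℝ] gm) (lX : g0 →ₗ[ℝ] g0 →ₗ[ℝ] gm)
    (s t : ℝ) (x y : g0) :
    Eser X0 X1 lX (t + s) x y
      = expv (t • X1) (Eser X0 X1 lX s x y)
        + Eser X0 X1 lX t (expv (s • X0) x) (expv (s • X0) y) := by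
  have : CompleteSpace g0 := FiniteDimensional.complete ℝ g0
  have : CompleteSpace gm := FiniteDimensional.complete ℝ gm
  exact Eser_one_parameter_general X0.toContinuousLinearMap X1.toContinuousLinearMap
    lX.toContinuousBilinearMap s t x y
end

section
/- Let g₀, g₋₁ be finite-dimensional real vector spaces and d : g₋₁ → g₀ linear. For Θ ∈ Hom(g₀,g₋₁) and t ∈ ℝ define e^{tΘ} := ∑_{n=1}^∞ (tⁿ/n!) Θ∘(d∘Θ)^{n−1} ∈ Hom(g₀,g₋₁). Then for all s,t ∈ ℝ: e^{(t+s)Θ} = e^{tΘ} + e^{sΘ} + e^{tΘ}∘d∘e^{sΘ}; that is, t ↦ e^{tΘ} is a one-parameter subgroup for the multiplication τ ⋆ τ′ := τ + τ′ + τ∘d∘τ′ on Hom(g₀,g₋₁). Moreover id_{g₀} + d∘e^{tΘ} = exp(t·d∘Θ) and id_{g₋₁} + e^{tΘ}∘d = exp(t·Θ∘d), so each e^{tΘ} is ⋆-invertible. -/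
/-!
If `d = π ∘ ι` factors through a Banach space `V`, then `τ ↦ 1 + ι ∘ τ ∘ π` turns `⋆` into
composition on `V`, and since `(ι ∘ Θ ∘ π)ⁿ⁺¹ = ι ∘ Θ ∘ (d ∘ Θ)ⁿ ∘ π`, it sends `e^Θ` to
`exp (ι ∘ Θ ∘ π)`. The factorizations `d = id ∘ d` and `d = d ∘ id` give the two formulas for
`exp (t • d ∘ Θ)` and `exp (t • Θ ∘ d)`. The factorization of `d` through its graph in `g₋₁ × g₀`
has `ι` injective and `π` surjective, so there `τ` can be recovered from `1 + ι ∘ τ ∘ π` and the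
group law for `e^{tΘ}` follows from the one for `exp`.
-/

open LinearMap

/-- The series `e^{tΘ} = ∑_{n≥1} (tⁿ/n!) Θ∘(d∘Θ)^{n−1}`, applied to `x`. -/
noncomputable def eTh {g0 gm : Type*}
    [NormedAddCommGroup g0] [NormedSpace ℝ g0]
    [NormedAddCommGroup gm] [NormedSpace ℝ gm]
    (d : gm →ₗ[ℝ] g0) (Θ : g0 →ₗ[ℝ] gm) (t : ℝ) (x : g0) : gm :=
  ∑' n : ℕ, (t ^ (n + 1) / ((n + 1).factorial : ℝ)) • Θ (((d ∘ₗ Θ) ^ n) x)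

section StarExponential

variable {𝕜 E F V : Type*} [RCLike 𝕜]
  [NormedAddCommGroup E] [NormedSpace 𝕜 E] [NormedAddCommGroup F] [NormedSpace 𝕜 F]
  [NormedAddCommGroup V] [NormedSpace 𝕜 V]
  {d : F →L[𝕜] E} {ι : F →L[𝕜] V} {π : V →L[𝕜] E}

/-- The product `τ ⋆ τ' = τ + τ' + τ ∘ d ∘ τ'` on bounded operators, with unit `0`. -/
def starMul (d : F →L[𝕜] E) (τ τ' : E →L[𝕜] F) : E →L[𝕜] F :=
  τ + τ' + τ ∘L d ∘L τ'

/-- The exponential `e^Θ` for the product `⋆`, as a series in operator norm. The paper's `e^{tΘ}`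
is `starExp d (t • Θ)`. -/
noncomputable def starExp (d : F →L[𝕜] E) (Θ : E →L[𝕜] F) : E →L[𝕜] F :=
  ∑' n : ℕ, ((n + 1).factorial : 𝕜)⁻¹ • Θ ∘L (d ∘L Θ) ^ n

theorem hasSum_starExp [CompleteSpace F] (d : F →L[𝕜] E) (Θ : E →L[𝕜] F) :
    HasSum (fun n : ℕ => ((n + 1).factorial : 𝕜)⁻¹ • Θ ∘L (d ∘L Θ) ^ n) (starExp d Θ) := by
  refine (Summable.of_norm_bounded
    ((NormedSpace.norm_expSeries_summable' (𝕂 := 𝕜) (d ∘L Θ)).mul_left ‖Θ‖) fun n => ?_).hasSum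
  have factorial_le : ((n + 1).factorial : ℝ)⁻¹ ≤ (n.factorial : ℝ)⁻¹ := by
    gcongr
    exact n.le_succ
  simp only [norm_smul, norm_inv, RCLike.norm_natCast]
  calc ((n + 1).factorial : ℝ)⁻¹ * ‖Θ ∘L (d ∘L Θ) ^ n‖
      ≤ (n.factorial : ℝ)⁻¹ * (‖Θ‖ * ‖(d ∘L Θ) ^ n‖) := by
        gcongr
        exact ContinuousLinearMap.opNorm_comp_le _ _
    _ = ‖Θ‖ * ((n.factorial : ℝ)⁻¹ * ‖(d ∘L Θ) ^ n‖) := by ring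

theorem hasSum_starExp_smul [CompleteSpace F] (d : F →L[𝕜] E) (Θ : E →L[𝕜] F) (t : 𝕜) :
    HasSum (fun n : ℕ => (t ^ (n + 1) / ((n + 1).factorial : 𝕜)) • Θ ∘L (d ∘L Θ) ^ n)
      (starExp d (t • Θ)) := by
  convert hasSum_starExp d (t • Θ) using 2 with n
  simp only [ContinuousLinearMap.comp_smul, ContinuousLinearMap.smul_comp, smul_pow, smul_smul,
    pow_succ, div_eq_inv_mul]

@[simp]
theorem starExp_zero (d : F →L[𝕜] E) : starExp d 0 = 0 := by
  simp [starExp]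

theorem one_add_comp_mul_one_add_comp (hd : π ∘L ι = d) (τ τ' : E →L[𝕜] F) :
    (1 + ι ∘L τ ∘L π) * (1 + ι ∘L τ' ∘L π) = 1 + ι ∘L starMul d τ τ' ∘L π := by
  subst hd
  ext v
  simp only [starMul, ContinuousLinearMap.comp_apply, mul_apply_eq_comp, _root_.add_apply,
    one_apply_eq_self, map_add]
  abel

theorem comp_pow_succ (hd : π ∘L ι = d) (Θ : E →L[𝕜] F) (n : ℕ) :
    (ι ∘L Θ ∘L π) ^ (n + 1) = ι ∘L (Θ ∘L (d ∘L Θ) ^ n) ∘L π := by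
  subst hd
  induction n with
  | zero => ext v; simp
  | succ n ih =>
    rw [pow_succ', ih, pow_succ']
    rfl

theorem exp_comp_eq_one_add_comp_starExp [CompleteSpace F] [CompleteSpace V]
    (hd : π ∘L ι = d) (Θ : E →L[𝕜] F) :
    NormedSpace.exp (ι ∘L Θ ∘L π) = 1 + ι ∘L starExp d Θ ∘L π := by
  have exp_tail := (hasSum_nat_add_iff' 1).2
    (NormedSpace.exp_series_hasSum_exp' (𝕂 := 𝕜) (ι ∘L Θ ∘L π))
  have star_series := (hasSum_starExp d Θ).mapL
    ((ContinuousLinearMap.compL 𝕜 V F V ι).comp ((ContinuousLinearMap.compL 𝕜 V E F).flip π))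
  simp only [comp_pow_succ hd] at exp_tail
  have tail_eq := exp_tail.unique (a₂ := ι ∘L starExp d Θ ∘L π) <| by
    simpa using star_series
  simpa [sub_eq_iff_eq_add'] using tail_eq

theorem one_add_comp_starExp [CompleteSpace E] [CompleteSpace F]
    (d : F →L[𝕜] E) (Θ : E →L[𝕜] F) :
    1 + d ∘L starExp d Θ = NormedSpace.exp (d ∘L Θ) :=
  (exp_comp_eq_one_add_comp_starExp (ContinuousLinearMap.id_comp d) Θ).symm

theorem one_add_starExp_comp [CompleteSpace F] (d : F →L[𝕜] E) (Θ : E →L[𝕜] F) :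
    1 + starExp d Θ ∘L d = NormedSpace.exp (Θ ∘L d) :=
  (exp_comp_eq_one_add_comp_starExp (ContinuousLinearMap.comp_id d) Θ).symm

theorem one_add_graph_comp_injective (d : F →L[𝕜] E) :
    Function.Injective fun τ : E →L[𝕜] F =>
      1 + ((ContinuousLinearMap.id 𝕜 F).prod d) ∘L τ ∘L ContinuousLinearMap.snd 𝕜 F E := by
  intro τ τ' h
  ext x
  simpa using congrArg Prod.fst (DFunLike.congr_fun h ((0 : F), x))

theorem starExp_add_of_comp_comm [CompleteSpace E] [CompleteSpace F] {Θ Θ' : E →L[𝕜] F}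
    (h : Θ ∘L d ∘L Θ' = Θ' ∘L d ∘L Θ) :
    starExp d (Θ + Θ') = starMul d (starExp d Θ) (starExp d Θ') := by
  let ι := (ContinuousLinearMap.id 𝕜 F).prod d
  let π := ContinuousLinearMap.snd 𝕜 F E
  have hd : π ∘L ι = d := rfl
  have commute : Commute (ι ∘L Θ ∘L π) (ι ∘L Θ' ∘L π) :=
    congrArg (fun τ => ι ∘L τ ∘L π) h
  let _ := NormedAlgebra.restrictScalars ℚ 𝕜 ((F × E) →L[𝕜] (F × E))
  apply one_add_graph_comp_injective d
  calc 1 + ι ∘L starExp d (Θ + Θ') ∘L π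
      = NormedSpace.exp (ι ∘L (Θ + Θ') ∘L π) := (exp_comp_eq_one_add_comp_starExp hd _).symm
    _ = NormedSpace.exp (ι ∘L Θ ∘L π + ι ∘L Θ' ∘L π) := by
        rw [ContinuousLinearMap.add_comp, ContinuousLinearMap.comp_add]
    _ = (1 + ι ∘L starExp d Θ ∘L π) * (1 + ι ∘L starExp d Θ' ∘L π) := by
        rw [NormedSpace.exp_add_of_commute commute, exp_comp_eq_one_add_comp_starExp hd,
          exp_comp_eq_one_add_comp_starExp hd]
    _ = 1 + ι ∘L starMul d (starExp d Θ) (starExp d Θ') ∘L π :=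
        one_add_comp_mul_one_add_comp hd _ _

theorem starExp_add_smul [CompleteSpace E] [CompleteSpace F] (d : F →L[𝕜] E) (Θ : E →L[𝕜] F)
    (t s : 𝕜) :
    starExp d ((t + s) • Θ) = starMul d (starExp d (t • Θ)) (starExp d (s • Θ)) := by
  rw [add_smul]
  apply starExp_add_of_comp_comm
  simp only [ContinuousLinearMap.comp_smul, ContinuousLinearMap.smul_comp, smul_comm t s]

theorem starMul_starExp_neg [CompleteSpace E] [CompleteSpace F]
    (d : F →L[𝕜] E) (Θ : E →L[𝕜] F) :
    starMul d (starExp d Θ) (starExp d (-Θ)) = 0 := by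
  rw [← starExp_add_of_comp_comm (by simp), add_neg_cancel, starExp_zero]

theorem starMul_starExp_neg_left [CompleteSpace E] [CompleteSpace F]
    (d : F →L[𝕜] E) (Θ : E →L[𝕜] F) :
    starMul d (starExp d (-Θ)) (starExp d Θ) = 0 := by
  simpa only [neg_neg] using starMul_starExp_neg d (-Θ)

end StarExponential

section RealSeries

variable {E F : Type*} [NormedAddCommGroup E] [NormedSpace ℝ E]
  [NormedAddCommGroup F] [NormedSpace ℝ F]

theorem expv_eq_exp [CompleteSpace E] (X : E →L[ℝ] E) (x : E) :
    expv X.toLinearMap x = NormedSpace.exp X x := by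
  have series := (NormedSpace.exp_series_hasSum_exp' (𝕂 := ℝ) X).mapL
    (ContinuousLinearMap.apply ℝ E x)
  simpa [expv, ← ContinuousLinearMap.toLinearMap_pow] using series.tsum_eq

theorem eTh_eq_starExp [CompleteSpace F] (d : F →L[ℝ] E) (Θ : E →L[ℝ] F) (t : ℝ) (x : E) :
    eTh d.toLinearMap Θ.toLinearMap t x = starExp d (t • Θ) x := by
  have series := (hasSum_starExp_smul d Θ t).mapL (ContinuousLinearMap.apply ℝ F x)
  refine (tsum_congr fun n => ?_).trans series.tsum_eq
  rw [← ContinuousLinearMap.toLinearMap_comp, ← ContinuousLinearMap.toLinearMap_pow]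
  rfl

end RealSeries

theorem eTh_one_parameter_subgroup_general
    {g0 gm : Type*}
    [NormedAddCommGroup g0] [NormedSpace ℝ g0] [CompleteSpace g0]
    [NormedAddCommGroup gm] [NormedSpace ℝ gm] [CompleteSpace gm]
    (d : gm →L[ℝ] g0) (Θ : g0 →L[ℝ] gm) :
    (∀ (s t : ℝ) (x : g0),
      eTh d.toLinearMap Θ (t + s) x
        = eTh d.toLinearMap Θ t x + eTh d.toLinearMap Θ s x
          + eTh d.toLinearMap Θ t (d (eTh d.toLinearMap Θ s x))) ∧
    (∀ (t : ℝ) (x : g0),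
      x + d (eTh d.toLinearMap Θ t x) = expv (t • (d ∘L Θ).toLinearMap) x) ∧
    (∀ (t : ℝ) (a : gm),
      a + eTh d.toLinearMap Θ t (d a) = expv (t • (Θ ∘L d).toLinearMap) a) ∧
    (∀ t : ℝ, ∃ τ' : g0 →L[ℝ] gm,
      (∀ x : g0, eTh d.toLinearMap Θ t x + τ' x + eTh d.toLinearMap Θ t (d (τ' x)) = 0) ∧
      (∀ x : g0, τ' x + eTh d.toLinearMap Θ t x + τ' (d (eTh d.toLinearMap Θ t x)) = 0)) := by
  simp only [eTh_eq_starExp, ← ContinuousLinearMap.toLinearMap_smul, expv_eq_exp,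
    ← ContinuousLinearMap.comp_smul d _ Θ, ← ContinuousLinearMap.smul_comp _ Θ d]
  exact ⟨fun s t => DFunLike.congr_fun (starExp_add_smul d Θ t s),
    fun t => DFunLike.congr_fun (one_add_comp_starExp d (t • Θ)),
    fun t => DFunLike.congr_fun (one_add_starExp_comp d (t • Θ)),
    fun t => ⟨starExp d (-(t • Θ)), DFunLike.congr_fun (starMul_starExp_neg d (t • Θ)),
      DFunLike.congr_fun (starMul_starExp_neg_left d (t • Θ))⟩⟩

/-- `t ↦ e^{tΘ}` is a one-parameter subgroup for `⋆`:
`e^{(t+s)Θ} = e^{tΘ} ⋆ e^{sΘ}`; moreover `id + d∘e^{tΘ} = exp(t·d∘Θ)` and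
`id + e^{tΘ}∘d = exp(t·Θ∘d)`, so each `e^{tΘ}` is ⋆-invertible. -/
theorem eTh_one_parameter_subgroup
    {g0 gm : Type*}
    [NormedAddCommGroup g0] [NormedSpace ℝ g0] [FiniteDimensional ℝ g0]
    [NormedAddCommGroup gm] [NormedSpace ℝ gm] [FiniteDimensional ℝ gm]
    (d : gm →ₗ[ℝ] g0) (Θ : g0 →ₗ[ℝ] gm) :
    (∀ (s t : ℝ) (x : g0),
      eTh d Θ (t + s) x
        = eTh d Θ t x + eTh d Θ s x + eTh d Θ t (d (eTh d Θ s x))) ∧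
    (∀ (t : ℝ) (x : g0), x + d (eTh d Θ t x) = expv (t • (d ∘ₗ Θ)) x) ∧
    (∀ (t : ℝ) (a : gm), a + eTh d Θ t (d a) = expv (t • (Θ ∘ₗ d)) a) ∧
    (∀ t : ℝ, ∃ τ' : g0 →ₗ[ℝ] gm,
      (∀ x : g0, eTh d Θ t x + τ' x + eTh d Θ t (d (τ' x)) = 0) ∧
      (∀ x : g0, τ' x + eTh d Θ t x + τ' (d (eTh d Θ t x)) = 0)) := by
  have := FiniteDimensional.complete ℝ g0
  have := FiniteDimensional.complete ℝ gm
  obtain ⟨add, exp_left, exp_right, inverse⟩ :=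
    eTh_one_parameter_subgroup_general d.toContinuousLinearMap Θ.toContinuousLinearMap
  exact ⟨add, exp_left, exp_right, fun t =>
    (inverse t).imp' ContinuousLinearMap.toLinearMap fun _ h => h⟩
end
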